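/- Assume a : [0,1] → ℝ is continuous on [0,1] and C¹ on (0,1], with a(x) > 0 for x ∈ (0,1], a(0) = 0, and m_a := sup_{0<x≤1} x·|a'(x)|/a(x) < 2. Then for every u ∈ H²_a(0,1), lim_{x→0⁺} x·a(x)·|u'(x)|² = 0. -/

import Mathlib

/-!
Write `v = a u'`, so that `v` is locally absolutely continuous on `(0,1]` with density `w ∈ L²`
and `|v|² / a = a |u'|²` is integrable.

Since `x |a'(x)| ≤ 2 a(x)`, the function `a(x) / x²` is nonincreasing
(`antitoneOn_div_sq`). Hence `a(t) ≤ 4 a(x)` for `t ∈ [x, 2x]`, and `x² / a(x) ≤ 1 / a(1)`.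

For `t ∈ [x, 2x]`, Cauchy–Schwarz (`norm_integral_sq_le`) gives
`|v(x)|² ≤ 2 |v(t)|² + 2 x ∫_x^{2x} |w|²`. Dividing by `a(x)` and integrating in `t` over
`[x, 2x]` yields
`x a(x) |u'(x)|² ≤ 8 ∫_x^{2x} a |u'|² + (2 / a(1)) ∫_x^{2x} |w|²`,
and both integrals tend to `0` as `x → 0⁺` because the integrands are integrable on `(0,1)`.
-/

open MeasureTheory Set Filter

/-- `u` belongs to the weighted space `H¹_a(0,1)`: `u ∈ L²(0,1)`, `u` is locally absolutely
continuous on `(0,1]` with density `u'` (fundamental theorem of calculus form), and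
`√a · u' ∈ L²(0,1)`. -/
def MemH1a (a : ℝ → ℝ) (u u' : ℝ → ℂ) : Prop :=
  IntegrableOn (fun x => ‖u x‖ ^ 2) (Ioo 0 1) ∧
  (∀ x ∈ Ioc (0:ℝ) 1, ∀ y ∈ Ioc (0:ℝ) 1, IntervalIntegrable u' volume x y) ∧
  (∀ x ∈ Ioc (0:ℝ) 1, ∀ y ∈ Ioc (0:ℝ) 1, u y - u x = ∫ t in x..y, u' t) ∧
  IntegrableOn (fun x => a x * ‖u' x‖ ^ 2) (Ioo 0 1)

/-- `u ∈ H²_a(0,1)`: `u ∈ H¹_a(0,1)` and `a·u'` belongs to the classical Sobolev space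
`H¹(0,1)`, with weak derivative `w = (a u')'`. -/
def MemH2a (a : ℝ → ℝ) (u u' w : ℝ → ℂ) : Prop :=
  MemH1a a u u' ∧
  IntegrableOn (fun x => ‖(a x : ℂ) * u' x‖ ^ 2) (Ioo 0 1) ∧
  IntegrableOn (fun x => ‖w x‖ ^ 2) (Ioo 0 1) ∧
  (∀ x ∈ Ioc (0:ℝ) 1, ∀ y ∈ Ioc (0:ℝ) 1, IntervalIntegrable w volume x y) ∧
  (∀ x ∈ Ioc (0:ℝ) 1, ∀ y ∈ Ioc (0:ℝ) 1,
    (a y : ℂ) * u' y - (a x : ℂ) * u' x = ∫ t in x..y, w t)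

lemma antitoneOn_div_sq (a a' : ℝ → ℝ)
    (hd : ∀ x ∈ Ioc (0:ℝ) 1, HasDerivAt a (a' x) x)
    (hle : ∀ x ∈ Ioc (0:ℝ) 1, x * a' x ≤ 2 * a x) :
    AntitoneOn (fun x => a x / x ^ 2) (Ioc 0 1) := by
  have key : ∀ x ∈ Ioc (0:ℝ) 1, HasDerivAt (fun x => a x / x ^ 2)
      ((a' x * x ^ 2 - a x * (2 * x)) / (x ^ 2) ^ 2) x := by
    intro x hx
    have h2 : HasDerivAt (fun x : ℝ => x ^ 2) (2 * x) x := by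
      simpa using hasDerivAt_pow 2 x
    exact (hd x hx).div h2 (pow_ne_zero 2 hx.1.ne')
  apply antitoneOn_of_deriv_nonpos (convex_Ioc 0 1)
  · exact fun x hx => (key x hx).continuousAt.continuousWithinAt
  · exact fun x hx => (key x (interior_subset hx)).differentiableAt.differentiableWithinAt
  · intro x hx
    have hx' := interior_subset hx
    rw [(key x hx').deriv]
    apply div_nonpos_of_nonpos_of_nonneg _ (by positivity)
    nlinarith [hle x hx', hx'.1]

/-- The Cauchy–Schwarz inequality `|∫_x^y w|² ≤ (y - x) ∫_x^y |w|²`. -/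
lemma norm_integral_sq_le (w : ℝ → ℂ) {x y : ℝ} (hxy : x ≤ y)
    (hw : IntervalIntegrable w volume x y)
    (hw2 : IntervalIntegrable (fun t => ‖w t‖ ^ 2) volume x y) :
    ‖∫ t in x..y, w t‖ ^ 2 ≤ (y - x) * ∫ t in x..y, ‖w t‖ ^ 2 := by
  rcases hxy.eq_or_lt with rfl | hlt
  · simp
  have hI : ‖∫ t in x..y, w t‖ ≤ ∫ t in x..y, ‖w t‖ :=
    intervalIntegral.norm_integral_le_integral_norm hxy
  set I := ∫ t in x..y, ‖w t‖ with hIdef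
  set J := ∫ t in x..y, ‖w t‖ ^ 2 with hJdef
  set L := y - x with hL
  have hLpos : 0 < L := sub_pos.mpr hlt
  -- expand `0 ≤ ∫ (|w| - I / L)²`
  have h0 : 0 ≤ ∫ t in x..y, (‖w t‖ - I / L) ^ 2 :=
    intervalIntegral.integral_nonneg hxy fun t _ => sq_nonneg _
  have h1 : ∫ t in x..y, (‖w t‖ - I / L) ^ 2 = J - 2 * (I / L) * I + L * (I / L) ^ 2 := by
    have : (fun t => (‖w t‖ - I / L) ^ 2)
        = fun t => (‖w t‖ ^ 2 - 2 * (I / L) * ‖w t‖) + (I / L) ^ 2 := by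
      funext t; ring
    rw [this, intervalIntegral.integral_add (hw2.sub (hw.norm.const_mul _))
      intervalIntegrable_const, intervalIntegral.integral_sub hw2 (hw.norm.const_mul _),
      intervalIntegral.integral_const_mul, intervalIntegral.integral_const, smul_eq_mul]
  have h2 : L * (J - 2 * (I / L) * I + L * (I / L) ^ 2) = L * J - I ^ 2 := by
    field_simp
    ring
  have h3 : 0 ≤ L * J - I ^ 2 := by
    rw [← h2, ← h1]
    exact mul_nonneg hLpos.le h0
  have h4 : ‖∫ t in x..y, w t‖ ^ 2 ≤ I ^ 2 := by gcongr
  linarith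

lemma tendsto_integral_dyadic (f : ℝ → ℝ) (hf : IntervalIntegrable f volume 0 1) :
    Tendsto (fun x => ∫ t in x..(2 * x), f t) (nhdsWithin 0 (Ioi 0)) (nhds 0) := by
  have hc : ContinuousOn (fun x => ∫ t in (0:ℝ)..x, f t) (uIcc 0 1) :=
    intervalIntegral.continuousOn_primitive_interval' hf left_mem_uIcc
  have hP : Tendsto (fun x => ∫ t in (0:ℝ)..x, f t) (nhdsWithin 0 (Icc 0 1)) (nhds 0) := by
    have := hc 0 left_mem_uIcc
    rw [uIcc_of_le zero_le_one] at this
    simpa [ContinuousWithinAt] using this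
  have hsmall : ∀ᶠ x : ℝ in nhdsWithin 0 (Ioi 0), x ∈ Ioo (0:ℝ) (1 / 2) :=
    Ioo_mem_nhdsGT (by norm_num)
  have h1 : Tendsto (fun x : ℝ => x) (nhdsWithin 0 (Ioi 0)) (nhdsWithin 0 (Icc 0 1)) := by
    refine tendsto_nhdsWithin_iff.mpr ⟨tendsto_id.mono_left nhdsWithin_le_nhds, ?_⟩
    filter_upwards [hsmall] with x hx
    exact ⟨hx.1.le, by linarith [hx.2]⟩
  have h2 : Tendsto (fun x : ℝ => 2 * x) (nhdsWithin 0 (Ioi 0)) (nhdsWithin 0 (Icc 0 1)) := by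
    refine tendsto_nhdsWithin_iff.mpr ⟨?_, ?_⟩
    · have : Tendsto (fun x : ℝ => 2 * x) (nhds 0) (nhds (2 * 0)) :=
        (continuous_const.mul continuous_id).tendsto 0
      rw [mul_zero] at this
      exact this.mono_left nhdsWithin_le_nhds
    · filter_upwards [hsmall] with x hx
      exact ⟨by linarith [hx.1], by linarith [hx.2]⟩
  have h := (hP.comp h2).sub (hP.comp h1)
  rw [sub_zero] at h
  refine h.congr' ?_
  filter_upwards [hsmall] with x hx
  have hsub : ∀ z ∈ Icc (0:ℝ) 1, IntervalIntegrable f volume 0 z := fun z hz =>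
    hf.mono_set (by rw [uIcc_of_le hz.1, uIcc_of_le zero_le_one]; exact Icc_subset_Icc_right hz.2)
  exact intervalIntegral.integral_interval_sub_left
    (hsub _ ⟨by linarith [hx.1], by linarith [hx.2]⟩) (hsub _ ⟨hx.1.le, by linarith [hx.2]⟩)

/-- Under the degeneracy hypotheses with `m_a < 2`, every `u ∈ H²_a(0,1)` satisfies
`lim_{x→0⁺} x·a(x)·|u'(x)|² = 0`. -/
theorem limit_x_a_u'_sq_zero
    (a a' : ℝ → ℝ) (ma : ℝ)
    (ha_cont : ContinuousOn a (Icc 0 1))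
    (ha_deriv : ∀ x ∈ Ioc (0:ℝ) 1, HasDerivAt a (a' x) x)
    (ha'_cont : ContinuousOn a' (Ioc 0 1))
    (ha_pos : ∀ x ∈ Ioc (0:ℝ) 1, 0 < a x)
    (ha0 : a 0 = 0)
    (hma : IsLUB {r : ℝ | ∃ x ∈ Ioc (0:ℝ) 1, r = x * |a' x| / a x} ma)
    (hma_lt : ma < 2) :
    ∀ u u' w : ℝ → ℂ, MemH2a a u u' w →
      Tendsto (fun x => x * a x * ‖u' x‖ ^ 2) (nhdsWithin 0 (Ioi 0)) (nhds 0) := by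
  intro u u' w hu
  obtain ⟨⟨-, -, -, hF⟩, -, hG, hw, hv⟩ := hu
  have hF' : IntervalIntegrable (fun x => a x * ‖u' x‖ ^ 2) volume 0 1 :=
    (intervalIntegrable_iff_integrableOn_Ioo_of_le zero_le_one).mpr hF
  have hG' : IntervalIntegrable (fun x => ‖w x‖ ^ 2) volume 0 1 :=
    (intervalIntegrable_iff_integrableOn_Ioo_of_le zero_le_one).mpr hG
  have hle : ∀ x ∈ Ioc (0:ℝ) 1, x * a' x ≤ 2 * a x := by
    intro x hx
    have h1 : x * |a' x| / a x ≤ 2 := (hma.1 ⟨x, hx, rfl⟩).trans hma_lt.le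
    rw [div_le_iff₀ (ha_pos x hx)] at h1
    exact (mul_le_mul_of_nonneg_left (le_abs_self _) hx.1.le).trans h1
  have hanti := antitoneOn_div_sq a a' ha_deriv hle
  have h1mem : (1:ℝ) ∈ Ioc (0:ℝ) 1 := ⟨zero_lt_one, le_rfl⟩
  have ha1 := ha_pos 1 h1mem
  have hlim := ((tendsto_integral_dyadic _ hF').const_mul 8).add
    ((tendsto_integral_dyadic _ hG').const_mul (2 / a 1))
  simp only [mul_zero, add_zero] at hlim
  have hsmall : ∀ᶠ x : ℝ in nhdsWithin 0 (Ioi 0), x ∈ Ioo (0:ℝ) (1 / 2) :=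
    Ioo_mem_nhdsGT (by norm_num)
  refine tendsto_of_tendsto_of_tendsto_of_le_of_le' tendsto_const_nhds hlim ?_ ?_
  · filter_upwards [hsmall] with x hx
    have := ha_pos x ⟨hx.1, by linarith [hx.2]⟩
    have := hx.1
    positivity
  filter_upwards [hsmall] with x hx
  have hx0 : 0 < x := hx.1
  have hx2 : 2 * x ≤ 1 := by linarith [hx.2]
  have hxm : x ∈ Ioc (0:ℝ) 1 := ⟨hx0, by linarith⟩
  have hax := ha_pos x hxm
  have hsub : ∀ f : ℝ → ℝ, IntervalIntegrable f volume 0 1 → ∀ t ∈ Icc x (2 * x),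
      IntervalIntegrable f volume x t := by
    intro f hf t ht
    refine hf.mono_set ?_
    rw [uIcc_of_le ht.1, uIcc_of_le zero_le_one]
    exact Icc_subset_Icc hx0.le (ht.2.trans hx2)
  have h2xm : 2 * x ∈ Icc x (2 * x) := ⟨by linarith, le_rfl⟩
  set F := ∫ t in x..(2 * x), a t * ‖u' t‖ ^ 2
  set G := ∫ t in x..(2 * x), ‖w t‖ ^ 2 with hGdef
  have hG0 : 0 ≤ G := intervalIntegral.integral_nonneg h2xm.1 fun t _ => sq_nonneg _
  have hpt : ∀ t ∈ Icc x (2 * x),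
      a x * ‖u' x‖ ^ 2 ≤ 8 * (a t * ‖u' t‖ ^ 2) + 2 * x * G / a x := by
    intro t ht
    have htm : t ∈ Ioc (0:ℝ) 1 := ⟨hx0.trans_le ht.1, ht.2.trans hx2⟩
    have hat := ha_pos t htm
    have hcomp : a t ≤ 4 * a x := by
      have h := hanti hxm htm ht.1
      simp only at h
      rw [div_le_div_iff₀ (pow_pos htm.1 2) (pow_pos hx0 2)] at h
      have h3 : t ^ 2 ≤ 4 * x ^ 2 := by nlinarith [ht.1, ht.2]
      have h4 : a x * t ^ 2 ≤ a x * (4 * x ^ 2) := mul_le_mul_of_nonneg_left h3 hax.le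
      have h5 : a t * x ^ 2 ≤ (4 * a x) * x ^ 2 := by linarith
      exact le_of_mul_le_mul_right h5 (pow_pos hx0 2)
    have hCS := norm_integral_sq_le w ht.1 (hw x hxm t htm) (hsub _ hG' t ht)
    rw [← hv x hxm t htm] at hCS
    have hmono : ∫ s in x..t, ‖w s‖ ^ 2 ≤ G :=
      intervalIntegral.integral_mono_interval le_rfl ht.1 ht.2
        (ae_of_all _ fun s => sq_nonneg ‖w s‖) (hsub _ hG' _ h2xm)
    have hCS' : ‖(a t : ℂ) * u' t - (a x : ℂ) * u' x‖ ^ 2 ≤ x * G :=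
      hCS.trans ((mul_le_mul_of_nonneg_left hmono (by linarith [ht.1])).trans
        (mul_le_mul_of_nonneg_right (by linarith [ht.2]) hG0))
    have htri : ‖(a x : ℂ) * u' x‖ ≤ ‖(a t : ℂ) * u' t‖ +
        ‖(a t : ℂ) * u' t - (a x : ℂ) * u' x‖ := by
      have := norm_sub_le ((a t : ℂ) * u' t) ((a t : ℂ) * u' t - (a x : ℂ) * u' x)
      rwa [sub_sub_cancel] at this
    have hsq : ‖(a x : ℂ) * u' x‖ ^ 2 ≤ 2 * ‖(a t : ℂ) * u' t‖ ^ 2 + 2 * (x * G) := by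
      have h1 := pow_le_pow_left₀ (norm_nonneg _) htri 2
      nlinarith [sq_nonneg (‖(a t : ℂ) * u' t‖ - ‖(a t : ℂ) * u' t - (a x : ℂ) * u' x‖)]
    rw [norm_mul, norm_mul, Complex.norm_real, Complex.norm_real, Real.norm_of_nonneg hax.le,
      Real.norm_of_nonneg hat.le] at hsq
    have h6 : a t * (a t * ‖u' t‖ ^ 2) ≤ 4 * a x * (a t * ‖u' t‖ ^ 2) :=
      mul_le_mul_of_nonneg_right hcomp (by positivity)
    have h7 : a x * (8 * (a t * ‖u' t‖ ^ 2) + 2 * x * G / a x)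
        = 8 * a x * (a t * ‖u' t‖ ^ 2) + 2 * (x * G) := by
      field_simp
    refine le_of_mul_le_mul_left ?_ hax
    rw [h7]
    linarith
  have hint := intervalIntegral.integral_mono_on h2xm.1 intervalIntegrable_const
    (((hsub _ hF' _ h2xm).const_mul 8).add intervalIntegrable_const) hpt
  rw [intervalIntegral.integral_add ((hsub _ hF' _ h2xm).const_mul 8) intervalIntegrable_const,
    intervalIntegral.integral_const, intervalIntegral.integral_const,
    intervalIntegral.integral_const_mul, smul_eq_mul, smul_eq_mul] at hint
  have hxa : x ^ 2 / a x ≤ 1 / a 1 := by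
    have h := hanti hxm h1mem hxm.2
    simp only [one_pow, div_one] at h
    rw [le_div_iff₀ (pow_pos hx0 2)] at h
    rw [div_le_div_iff₀ hax ha1]
    linarith
  have h8 : (2 * x - x) * (2 * x * G / a x) ≤ 2 / a 1 * G := by
    have e1 : (2 * x - x) * (2 * x * G / a x) = 2 * G * (x ^ 2 / a x) := by ring
    have e2 : 2 / a 1 * G = 2 * G * (1 / a 1) := by ring
    rw [e1, e2]
    exact mul_le_mul_of_nonneg_left hxa (by positivity)
  have h9 : x * a x * ‖u' x‖ ^ 2 = (2 * x - x) * (a x * ‖u' x‖ ^ 2) := by ring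
  rw [h9]
  linarith
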